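/- For every integer ν ≥ 2, the unique positive solution Ω* of the equation Ω²/(ν(ν−1)) = (1 − γ(ν+1, Ω))/γ(ν−1, Ω) satisfies ν−1 < Ω* < ν. -/

import Mathlib

/-!
Write `ν = k + 2` and `a j x = ∫₀ˣ sʲ e⁻ˢ ds`. After clearing denominators the equation reads
`Ω² a k Ω + a (k+2) Ω = (k+2)!`. The left side is strictly increasing on `[0, ∞)`, so everything
reduces to showing that it is below `(k+2)!` at `ν - 1` and above `(k+2)!` at `ν`.

* At `m = ν - 1`, integration by parts turns the left side into `(2m+1) a m m`. The integrand
  satisfies `f(s) ≤ f(2m - s)` for `0 ≤ s ≤ m`, so `2 a m m ≤ a m (2m) ≤ m!`, which suffices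
  (`two_mul_incGamma_le`).
* At `n = ν`, the inequality is `n² ∫₀ⁿ sⁿ⁻² e⁻ˢ ds > ∫ₙ^∞ sⁿ e⁻ˢ ds`. Under the inversion
  `s ↦ n²/s` the two integrands compare pointwise, by `t < sinh t` (`factorial_lt_at_nu`).
-/

open Real Filter

/-- Normalized lower incomplete gamma function. -/
noncomputable def lowerGamma (t u : ℝ) : ℝ :=
  (∫ s in (0:ℝ)..u, s ^ (t - 1) * Real.exp (-s)) / Real.Gamma t

/-- The unnormalized lower incomplete gamma integral with natural exponent `j`, that is, at
parameter `j + 1`. -/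
noncomputable def incGamma (j : ℕ) (x : ℝ) : ℝ := ∫ s in (0:ℝ)..x, s ^ j * Real.exp (-s)

lemma continuous_integrand (j : ℕ) : Continuous fun s : ℝ => s ^ j * Real.exp (-s) := by
  fun_prop

lemma hasDerivAt_incGamma (j : ℕ) (x : ℝ) :
    HasDerivAt (incGamma j) (x ^ j * Real.exp (-x)) x :=
  intervalIntegral.integral_hasDerivAt_right ((continuous_integrand j).intervalIntegrable _ _)
    ((continuous_integrand j).stronglyMeasurableAtFilter _ _)
    (continuous_integrand j).continuousAt

lemma incGamma_pos (j : ℕ) {x : ℝ} (hx : 0 < x) : 0 < incGamma j x :=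
  intervalIntegral.intervalIntegral_pos_of_pos_on
    ((continuous_integrand j).intervalIntegrable _ _)
    (fun _ hs => mul_pos (pow_pos hs.1 j) (Real.exp_pos _)) hx

lemma incGamma_zero (j : ℕ) : incGamma j 0 = 0 := by simp [incGamma]

lemma incGamma_nonneg (j : ℕ) {x : ℝ} (hx : 0 ≤ x) : 0 ≤ incGamma j x := by
  rcases hx.eq_or_lt with rfl | h
  · rw [incGamma_zero]
  · exact (incGamma_pos j h).le

lemma incGamma_mono (j : ℕ) {x y : ℝ} (hx : 0 ≤ x) (hxy : x ≤ y) :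
    incGamma j x ≤ incGamma j y := by
  have h : incGamma j x + ∫ s in x..y, s ^ j * Real.exp (-s) = incGamma j y :=
    intervalIntegral.integral_add_adjacent_intervals
      ((continuous_integrand j).intervalIntegrable _ _)
      ((continuous_integrand j).intervalIntegrable _ _)
  have h2 : 0 ≤ ∫ s in x..y, s ^ j * Real.exp (-s) :=
    intervalIntegral.integral_nonneg hxy fun s hs =>
      mul_nonneg (pow_nonneg (hx.trans hs.1) j) (Real.exp_pos _).le
  linarith

lemma tendsto_incGamma (j : ℕ) :
    Tendsto (incGamma j) atTop (nhds (j.factorial : ℝ)) := by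
  have hj : (0:ℝ) < (j:ℝ) + 1 := by positivity
  have e : ∀ s : ℝ, Real.exp (-s) * s ^ ((j:ℝ) + 1 - 1) = s ^ j * Real.exp (-s) := by
    intro s
    rw [add_sub_cancel_right, Real.rpow_natCast, mul_comm]
  have hc := Real.GammaIntegral_convergent hj
  have hG := Real.Gamma_eq_integral hj
  simp only [e] at hc hG
  rw [← Real.Gamma_nat_eq_factorial, hG]
  exact MeasureTheory.intervalIntegral_tendsto_integral_Ioi 0 hc tendsto_id

lemma incGamma_le (j : ℕ) {x : ℝ} (hx : 0 ≤ x) : incGamma j x ≤ j.factorial :=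
  ge_of_tendsto (tendsto_incGamma j)
    ((eventually_ge_atTop x).mono fun _ hy => incGamma_mono j hx hy)

/-- Integration by parts. -/
lemma incGamma_succ (j : ℕ) (x : ℝ) :
    incGamma (j + 1) x = (j + 1) * incGamma j x - x ^ (j + 1) * Real.exp (-x) := by
  have hd : ∀ s : ℝ, HasDerivAt (fun s : ℝ => s ^ (j + 1) * Real.exp (-s))
      ((j + 1) * (s ^ j * Real.exp (-s)) - s ^ (j + 1) * Real.exp (-s)) s := by
    intro s
    have h := (hasDerivAt_pow (j + 1) s).mul (hasDerivAt_neg s).exp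
    refine h.congr_deriv ?_
    simp only [Nat.add_sub_cancel]
    push_cast
    ring
  have h := intervalIntegral.integral_eq_sub_of_hasDerivAt (a := 0) (b := x)
    (fun s _ => hd s) (Continuous.intervalIntegrable (by fun_prop) _ _)
  rw [intervalIntegral.integral_sub
    (Continuous.intervalIntegrable (by fun_prop) _ _)
    (Continuous.intervalIntegrable (by fun_prop) _ _),
    intervalIntegral.integral_const_mul] at h
  simp only [ne_eq, Nat.add_eq_zero_iff, one_ne_zero, and_false, not_false_eq_true, zero_pow,
    zero_mul, sub_zero] at h
  unfold incGamma
  linarith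

/-- The function `(1 + u) e⁻ᵘ - (1 - u) eᵘ` vanishes at `0` and has derivative
`u (eᵘ - e⁻ᵘ) ≥ 0`. -/
lemma reflection_base {u : ℝ} (hu : 0 ≤ u) :
    (1 - u) * Real.exp u ≤ (1 + u) * Real.exp (-u) := by
  have hd : ∀ v : ℝ, HasDerivAt
      (fun v : ℝ => (1 + v) * Real.exp (-v) - (1 - v) * Real.exp v)
      (v * (Real.exp v - Real.exp (-v))) v := by
    intro v
    have h1 := ((hasDerivAt_id v).const_add 1).mul (hasDerivAt_neg v).exp
    have h2 := ((hasDerivAt_id v).const_sub 1).mul (Real.hasDerivAt_exp v)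
    refine (h1.sub h2).congr_deriv ?_
    simp only [id]
    ring
  have hm : MonotoneOn (fun v : ℝ => (1 + v) * Real.exp (-v) - (1 - v) * Real.exp v)
      (Set.Ici 0) := by
    refine monotoneOn_of_hasDerivWithinAt_nonneg (convex_Ici 0) (by fun_prop)
      (fun v _ => (hd v).hasDerivWithinAt) ?_
    intro v hv
    rw [interior_Ici, Set.mem_Ioi] at hv
    exact mul_nonneg hv.le (sub_nonneg.2 (Real.exp_le_exp.2 (by linarith)))
  have := hm (Set.mem_Ici.2 le_rfl) (Set.mem_Ici.2 hu) hu
  simp at this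
  linarith

/-- The gamma density with mode `m` is smaller at `s ≤ m` than at the mirror image `2m - s`. -/
lemma reflection_le (m : ℕ) (hm : 0 < m) {s : ℝ} (h0 : 0 ≤ s) (h1 : s ≤ m) :
    s ^ m * Real.exp (-s) ≤ (2 * m - s) ^ m * Real.exp (-(2 * m - s)) := by
  have hmR : (0:ℝ) < m := by exact_mod_cast hm
  obtain ⟨y, rfl⟩ : ∃ y : ℝ, s = m * (1 - y) := ⟨1 - s / m, by field_simp; ring⟩
  have hy0 : 0 ≤ y := by nlinarith
  have hy1 : 0 ≤ 1 - y := by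
    by_contra! h
    nlinarith
  have key := pow_le_pow_left₀ (mul_nonneg hy1 (Real.exp_pos _).le) (reflection_base hy0) m
  rw [mul_pow, mul_pow, ← Real.exp_nat_mul, ← Real.exp_nat_mul] at key
  have e1 : Real.exp (-(m * (1 - y))) = Real.exp (m * y) * Real.exp (-m) := by
    rw [← Real.exp_add]; ring_nf
  have e2 : Real.exp (-(2 * m - m * (1 - y))) = Real.exp (m * -y) * Real.exp (-m) := by
    rw [← Real.exp_add]; ring_nf
  have e3 : (2 * m - m * (1 - y) : ℝ) = m * (1 + y) := by ring
  rw [e1, e2, e3, mul_pow, mul_pow]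
  have hp : 0 ≤ (m:ℝ) ^ m * Real.exp (-m) := by positivity
  calc _ = ((m:ℝ) ^ m * Real.exp (-m)) * ((1 - y) ^ m * Real.exp (m * y)) := by ring
    _ ≤ ((m:ℝ) ^ m * Real.exp (-m)) * ((1 + y) ^ m * Real.exp (m * -y)) :=
      mul_le_mul_of_nonneg_left key hp
    _ = _ := by ring

/-- The median of the gamma distribution with parameter `m + 1` is at least its mode `m`. -/
lemma two_mul_incGamma_le (m : ℕ) (hm : 0 < m) : 2 * incGamma m m ≤ m.factorial := by
  have hmR : (0:ℝ) < m := by exact_mod_cast hm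
  have h : incGamma m m + ∫ s in (m:ℝ)..(2 * m), s ^ m * Real.exp (-s) = incGamma m (2 * m) :=
    intervalIntegral.integral_add_adjacent_intervals
      ((continuous_integrand m).intervalIntegrable _ _)
      ((continuous_integrand m).intervalIntegrable _ _)
  have h2 : (∫ s in (0:ℝ)..m, (2 * m - s) ^ m * Real.exp (-(2 * m - s)))
      = ∫ s in (m:ℝ)..(2 * m), s ^ m * Real.exp (-s) := by
    rw [intervalIntegral.integral_comp_sub_left (fun s : ℝ => s ^ m * Real.exp (-s)) (2 * m : ℝ)]
    congr 1 <;> ring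
  have h3 : incGamma m m ≤ ∫ s in (0:ℝ)..m, (2 * m - s) ^ m * Real.exp (-(2 * m - s)) :=
    intervalIntegral.integral_mono_on hmR.le ((continuous_integrand m).intervalIntegrable _ _)
      (Continuous.intervalIntegrable (by fun_prop) _ _)
      fun s hs => reflection_le m hm hs.1 hs.2
  have := incGamma_le m (x := 2 * m) (by positivity)
  linarith

/-- The cleared-denominator form of the left side of the optimality condition for `ν = k + 2`. -/
noncomputable def balance (k : ℕ) (x : ℝ) : ℝ := x ^ 2 * incGamma k x + incGamma (k + 2) x

lemma hasDerivAt_balance (k : ℕ) (x : ℝ) : HasDerivAt (balance k)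
    (2 * x * incGamma k x + 2 * (x ^ (k + 2) * Real.exp (-x))) x := by
  have h := ((hasDerivAt_pow 2 x).mul (hasDerivAt_incGamma k x)).add (hasDerivAt_incGamma (k + 2) x)
  refine h.congr_deriv ?_
  norm_num
  ring

lemma continuous_balance (k : ℕ) : Continuous (balance k) :=
  continuous_iff_continuousAt.2 fun x => (hasDerivAt_balance k x).continuousAt

lemma balance_strictMonoOn (k : ℕ) : StrictMonoOn (balance k) (Set.Ici 0) := by
  refine strictMonoOn_of_deriv_pos (convex_Ici 0) (continuous_balance k).continuousOn ?_
  intro x hx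
  rw [interior_Ici, Set.mem_Ioi] at hx
  rw [(hasDerivAt_balance k x).deriv]
  have := incGamma_pos k hx
  positivity

lemma balance_lt_factorial (k : ℕ) : balance k (k + 1) < (k + 2).factorial := by
  have h1 := incGamma_succ k (k + 1)
  have h2 := incGamma_succ (k + 1) (k + 1)
  have h3 := two_mul_incGamma_le (k + 1) (by omega)
  have hf : ((k + 2).factorial : ℝ) = (k + 2) * (k + 1).factorial := by
    rw [Nat.factorial_succ]; push_cast; ring
  have hp : (0:ℝ) < (k + 1).factorial := by exact_mod_cast Nat.factorial_pos _
  push_cast at h2 h3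
  have hb : balance k (k + 1) = (2 * k + 3) * incGamma (k + 1) (k + 1) := by
    unfold balance
    rw [h2, h1]
    ring
  rw [hb, hf]
  have hk : (0:ℝ) ≤ k := by positivity
  nlinarith

/-- The equivalent of `z² e^{1/z - z} < 1` for `z = x / n > 1`; with `z = eᵗ` it says
`t < sinh t`. -/
lemma inversion_base {z : ℝ} (hz : 1 < z) : z ^ 2 * Real.exp (1 / z) < Real.exp z := by
  have hz0 : 0 < z := by linarith
  have h := Real.self_lt_sinh_iff.2 (Real.log_pos hz)
  rw [Real.sinh_eq, Real.exp_neg, Real.exp_log hz0] at h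
  have e : z ^ 2 = Real.exp (2 * Real.log z) := by
    rw [two_mul, Real.exp_add, Real.exp_log hz0, sq]
  rw [e, ← Real.exp_add, Real.exp_lt_exp, one_div]
  linarith

lemma inversion_lt (k : ℕ) {n x : ℝ} (hn : n = k + 2) (hx : n < x) :
    x ^ (k + 2) * Real.exp (-x)
      < n ^ 2 * ((n ^ 2 / x) ^ k * Real.exp (-(n ^ 2 / x)) * (n ^ 2 / x ^ 2)) := by
  have hn0 : 0 < n := by rw [hn]; positivity
  obtain ⟨z, rfl⟩ : ∃ z, x = n * z := ⟨x / n, by field_simp⟩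
  have hz : 1 < z := by
    by_contra! h
    nlinarith
  have hz0 : 0 < z := by linarith
  have key := pow_lt_pow_left₀ (inversion_base hz) (by positivity)
    (show k + 2 ≠ 0 by omega)
  rw [mul_pow, ← Real.exp_nat_mul, ← Real.exp_nat_mul] at key
  push_cast at key
  rw [← hn] at key
  have e : n ^ 2 / (n * z) = n * (1 / z) := by field_simp
  rw [e, Real.exp_neg, Real.exp_neg, mul_pow, mul_pow, mul_pow, one_div_pow]
  have hE1 := Real.exp_pos (n * z)
  have hE2 := Real.exp_pos (n * (1 / z))
  have e2 : n ^ 2 * (n ^ k * (1 / z ^ k) * (Real.exp (n * (1 / z)))⁻¹ * (n ^ 2 / (n ^ 2 * z ^ 2)))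
      = n ^ (k + 2) * (Real.exp (n * z) /
        (z ^ (k + 2) * Real.exp (n * (1 / z)) * Real.exp (n * z))) := by
    field_simp
    ring
  have e3 : n ^ (k + 2) * z ^ (k + 2) * (Real.exp (n * z))⁻¹
      = n ^ (k + 2) * ((z ^ 2) ^ (k + 2) * Real.exp (n * (1 / z)) /
        (z ^ (k + 2) * Real.exp (n * (1 / z)) * Real.exp (n * z))) := by
    field_simp
    ring
  rw [e2, e3]
  gcongr

/-- With `n = k + 2`, the function
`D x = n² ∫_{n²/x}^n sᵏ e⁻ˢ ds - ∫_n^x s^{k+2} e⁻ˢ ds` vanishes at `n` and is strictly increasing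
on `[n, ∞)`, while its limit at infinity is `balance k n - (k+2)!`. -/
lemma factorial_lt_at_nu (k : ℕ) : ((k + 2).factorial : ℝ) < balance k (k + 2) := by
  obtain ⟨n, hn⟩ : ∃ n : ℝ, n = k + 2 := ⟨_, rfl⟩
  have hn0 : 0 < n := by rw [hn]; positivity
  rw [← hn]
  let D : ℝ → ℝ := fun x =>
    n ^ 2 * (incGamma k n - incGamma k (n ^ 2 / x)) - (incGamma (k + 2) x - incGamma (k + 2) n)
  have hd : ∀ x : ℝ, 0 < x → HasDerivAt D
      (n ^ 2 * ((n ^ 2 / x) ^ k * Real.exp (-(n ^ 2 / x)) * (n ^ 2 / x ^ 2))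
        - x ^ (k + 2) * Real.exp (-x)) x := by
    intro x hx
    have h0 : HasDerivAt (fun x : ℝ => n ^ 2 / x) (-(n ^ 2 / x ^ 2)) x := by
      have := (hasDerivAt_inv hx.ne').const_mul (n ^ 2)
      refine this.congr_deriv ?_
      field_simp
    have h1 := (hasDerivAt_incGamma k (n ^ 2 / x)).comp x h0
    have h2 := ((h1.const_sub (incGamma k n)).const_mul (n ^ 2)).sub
      ((hasDerivAt_incGamma (k + 2) x).sub_const (incGamma (k + 2) n))
    refine h2.congr_deriv ?_
    ring
  have hD : StrictMonoOn D (Set.Ici n) := by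
    refine strictMonoOn_of_deriv_pos (convex_Ici n)
      (fun x hx => (hd x (hn0.trans_le hx)).continuousAt.continuousWithinAt) ?_
    intro x hx
    rw [interior_Ici, Set.mem_Ioi] at hx
    rw [(hd x (hn0.trans hx)).deriv]
    exact sub_pos.2 (inversion_lt k hn hx)
  have hDn : D n = 0 := by
    have : n ^ 2 / n = n := by field_simp
    simp [D, this]
  have hpos : 0 < D (2 * n) := by
    rw [← hDn]
    exact hD (Set.mem_Ici.2 le_rfl) (Set.mem_Ici.2 (by linarith)) (by linarith)
  have hle : ((k + 2).factorial : ℝ) ≤ balance k n - D (2 * n) := by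
    refine le_of_tendsto (tendsto_incGamma (k + 2)) ?_
    filter_upwards [eventually_ge_atTop (2 * n)] with x hx
    have h1 : D (2 * n) ≤ D x :=
      hD.monotoneOn (Set.mem_Ici.2 (by linarith)) (Set.mem_Ici.2 (by linarith)) hx
    have h2 : 0 ≤ n ^ 2 * incGamma k (n ^ 2 / x) :=
      mul_nonneg (by positivity)
        (incGamma_nonneg k (div_nonneg (by positivity) (by linarith)))
    have h3 : D x = n ^ 2 * (incGamma k n - incGamma k (n ^ 2 / x))
      - (incGamma (k + 2) x - incGamma (k + 2) n) := rfl
    unfold balance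
    linarith
  linarith

lemma lowerGamma_eq (j : ℕ) {t : ℝ} (ht : t = j + 1) (u : ℝ) :
    lowerGamma t u = incGamma j u / j.factorial := by
  subst ht
  unfold lowerGamma incGamma
  simp only [add_sub_cancel_right, Real.rpow_natCast, Real.Gamma_nat_eq_factorial]

lemma equation_iff (k : ℕ) {x : ℝ} (hx : 0 < x) :
    x ^ 2 / (((k + 2 : ℕ) : ℝ) * (((k + 2 : ℕ) : ℝ) - 1)) =
        (1 - lowerGamma (((k + 2 : ℕ) : ℝ) + 1) x) / lowerGamma (((k + 2 : ℕ) : ℝ) - 1) x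
      ↔ balance k x = (k + 2).factorial := by
  rw [lowerGamma_eq (k + 2) rfl, lowerGamma_eq k (by push_cast; ring)]
  have hA := incGamma_pos k hx
  have hf : ((k + 2).factorial : ℝ) = (k + 2) * ((k + 1) * k.factorial) := by
    rw [Nat.factorial_succ, Nat.factorial_succ]; push_cast; ring
  have hp : (0:ℝ) < k.factorial := by exact_mod_cast Nat.factorial_pos _
  have hk1 : (0:ℝ) < (k:ℝ) + 1 := by positivity
  have hk2 : (0:ℝ) < (k:ℝ) + 2 := by positivity
  have e : (((k + 2 : ℕ) : ℝ) * (((k + 2 : ℕ) : ℝ) - 1)) = (k + 2) * (k + 1) := by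
    push_cast; ring
  have e2 : (1 - incGamma (k + 2) x / ((k + 2) * ((k + 1) * k.factorial)))
      / (incGamma k x / k.factorial)
      = ((k + 2) * ((k + 1) * k.factorial) - incGamma (k + 2) x)
        / ((k + 2) * (k + 1) * incGamma k x) := by
    field_simp
  rw [e, hf, e2, div_eq_div_iff (by positivity) (by positivity)]
  unfold balance
  constructor
  · intro h
    have : ((k:ℝ) + 2) * (k + 1) * (x ^ 2 * incGamma k x + incGamma (k + 2) x)
        = (k + 2) * (k + 1) * ((k + 2) * ((k + 1) * k.factorial)) := by linarith
    exact mul_left_cancel₀ (by positivity) this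
  · intro h
    linear_combination ((k:ℝ) + 2) * (k + 1) * h

theorem stmt18 (ν : ℕ) (hν : 2 ≤ ν) :
    (∃! Ω : ℝ, 0 < Ω ∧
      Ω ^ 2 / ((ν : ℝ) * ((ν : ℝ) - 1)) =
        (1 - lowerGamma ((ν : ℝ) + 1) Ω) / lowerGamma ((ν : ℝ) - 1) Ω) ∧
    ∀ Ω : ℝ, 0 < Ω →
      Ω ^ 2 / ((ν : ℝ) * ((ν : ℝ) - 1)) =
        (1 - lowerGamma ((ν : ℝ) + 1) Ω) / lowerGamma ((ν : ℝ) - 1) Ω →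
      (ν : ℝ) - 1 < Ω ∧ Ω < (ν : ℝ) := by
  obtain ⟨k, rfl⟩ : ∃ k, ν = k + 2 := ⟨ν - 2, by omega⟩
  have hlo := balance_lt_factorial k
  have hhi := factorial_lt_at_nu k
  have hmono := balance_strictMonoOn k
  have hk : (0:ℝ) ≤ k := by positivity
  constructor
  · obtain ⟨x, hx, hxe⟩ := intermediate_value_Icc (show (k:ℝ) + 1 ≤ k + 2 by linarith)
      (continuous_balance k).continuousOn ⟨hlo.le, hhi.le⟩
    have hx0 : 0 < x := by linarith [hx.1]
    refine ⟨x, ⟨hx0, (equation_iff k hx0).2 hxe⟩, ?_⟩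
    rintro y ⟨hy0, hy⟩
    exact hmono.injOn (Set.mem_Ici.2 hy0.le) (Set.mem_Ici.2 hx0.le)
      (((equation_iff k hy0).1 hy).trans hxe.symm)
  · intro x hx0 hx
    rw [equation_iff k hx0] at hx
    rw [← hx] at hlo hhi
    have h1 := (hmono.lt_iff_lt (Set.mem_Ici.2 (by linarith)) (Set.mem_Ici.2 hx0.le)).1 hlo
    have h2 := (hmono.lt_iff_lt (Set.mem_Ici.2 hx0.le) (Set.mem_Ici.2 (by linarith))).1 hhi
    push_cast
    constructor <;> linarith
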